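/- arXiv:2003.11007 — 2 statements merged into one kernel-verified Lean document; each statement's English description precedes it below -/
import Mathlib

section
/- Let X and Y be complex inner product spaces and let f : Projectivization ℂ X → Projectivization ℂ Y be a map that preserves transition probabilities. Let e₁, e₂ ∈ X be orthonormal (unit vectors with ⟪e₁,e₂⟫ = 0) and let v₁, v₂ ∈ Y be unit vectors with f (mk e₁) = mk v₁ and f (mk e₂) = mk v₂. Then there exists k ∈ ℂ with ‖k‖ = 1 such that f (mk (e₁ + e₂)) = mk (v₁ + k • v₂). -/
open scoped InnerProductSpace

/-!
Rescale a vector `y` on the image ray of `x = e₁ + e₂` so that `‖y‖ = ‖x‖`. Preservation of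
transition probabilities then says that `v₁, v₂` are orthonormal and `‖⟪vᵢ, y⟫‖ = ‖⟪eᵢ, x⟫‖ = 1`.
Bessel's inequality is an equality for `x`, hence also for `y`, so that `y` is a combination of
`v₁, v₂` with coefficients of modulus one; dividing by the first one gives the claim.
-/

section Bessel

variable {𝕜 E ι : Type*} [RCLike 𝕜] [Fintype ι]

theorem norm_sum_smul_sq_of_orthonormal [SeminormedAddCommGroup E] [InnerProductSpace 𝕜 E]
    {v : ι → E} (hv : Orthonormal 𝕜 v) (a : ι → 𝕜) :
    ‖∑ i, a i • v i‖ ^ 2 = ∑ i, ‖a i‖ ^ 2 := by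
  rw [← RCLike.ofReal_inj (K := 𝕜)]
  push_cast
  rw [← inner_self_eq_norm_sq_to_K, hv.inner_sum]
  simp only [RCLike.conj_mul]

theorem sum_inner_smul_eq_self_of_sum_norm_inner_sq_eq [NormedAddCommGroup E]
    [InnerProductSpace 𝕜 E] {v : ι → E} (hv : Orthonormal 𝕜 v) {x : E}
    (hx : ∑ i, ‖⟪v i, x⟫_𝕜‖ ^ 2 = ‖x‖ ^ 2) :
    ∑ i, ⟪v i, x⟫_𝕜 • v i = x := by
  set p := ∑ i, ⟪v i, x⟫_𝕜 • v i with hp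
  have horth : ⟪p, x - p⟫_𝕜 = 0 := by
    rw [hp, sum_inner]
    refine Finset.sum_eq_zero fun i _ => ?_
    rw [inner_smul_left, inner_sub_right, hv.inner_right_fintype, sub_self, mul_zero]
  have hpyth : ‖x‖ ^ 2 = ‖p‖ ^ 2 + ‖x - p‖ ^ 2 := by
    simpa only [add_sub_cancel, ← sq] using
      norm_add_sq_eq_norm_sq_add_norm_sq_of_inner_eq_zero p (x - p) horth
  have hnorm : ‖p‖ ^ 2 = ‖x‖ ^ 2 := (norm_sum_smul_sq_of_orthonormal hv _).trans hx
  have hzero : ‖x - p‖ ^ 2 = 0 := by linarith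
  exact (sub_eq_zero.mp (norm_eq_zero.mp (pow_eq_zero_iff two_ne_zero |>.mp hzero))).symm

end Bessel

section TransitionProbability

open scoped LinearAlgebra.Projectivization

variable {𝕜 𝕜' E X Y ι : Type*} [RCLike 𝕜] [RCLike 𝕜']
variable [NormedAddCommGroup E] [InnerProductSpace 𝕜 E]
variable [NormedAddCommGroup X] [InnerProductSpace 𝕜 X]
variable [NormedAddCommGroup Y] [InnerProductSpace 𝕜' Y]

/-- The transition probability of two rays, computed on the representatives chosen by
`Projectivization.rep`; by `transitionProbability_mk_mk` the choice is immaterial. -/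
noncomputable def transitionProbability (p q : ℙ 𝕜 E) : ℝ :=
  ‖⟪p.rep, q.rep⟫_𝕜‖ ^ 2 / (‖p.rep‖ ^ 2 * ‖q.rep‖ ^ 2)

theorem transitionProbability_mk_mk {v w : E} (hv : v ≠ 0) (hw : w ≠ 0) :
    transitionProbability (.mk 𝕜 v hv) (.mk 𝕜 w hw) =
      ‖⟪v, w⟫_𝕜‖ ^ 2 / (‖v‖ ^ 2 * ‖w‖ ^ 2) := by
  obtain ⟨a, ha⟩ := Projectivization.exists_smul_eq_mk_rep 𝕜 v hv
  obtain ⟨b, hb⟩ := Projectivization.exists_smul_eq_mk_rep 𝕜 w hw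
  have ha₀ : ‖(a : 𝕜)‖ ≠ 0 := norm_ne_zero_iff.mpr a.ne_zero
  have hb₀ : ‖(b : 𝕜)‖ ≠ 0 := norm_ne_zero_iff.mpr b.ne_zero
  simp only [transitionProbability, ← ha, ← hb, Units.smul_def, inner_smul_left,
    inner_smul_right, norm_mul, norm_smul, RCLike.norm_conj]
  field_simp

theorem exists_norm_eq_and_mk_eq {V : Type*} [NormedAddCommGroup V] [NormedSpace 𝕜 V]
    (p : ℙ 𝕜 V) {r : ℝ} (hr : 0 < r) :
    ∃ (w : V) (hw : w ≠ 0), ‖w‖ = r ∧ Projectivization.mk 𝕜 w hw = p := by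
  have hnorm : ‖((r * ‖p.rep‖⁻¹ : ℝ) : 𝕜) • p.rep‖ = r := by
    rw [norm_smul, RCLike.norm_ofReal, abs_of_nonneg (by positivity),
      inv_mul_cancel_right₀ (norm_ne_zero_iff.mpr p.rep_nonzero)]
  refine ⟨_, ne_zero_of_norm_ne_zero (hnorm.trans_ne hr.ne'), hnorm, ?_⟩
  exact ((Projectivization.mk_eq_mk_iff' 𝕜 _ _ _ p.rep_nonzero).mpr ⟨_, rfl⟩).trans p.mk_rep

/-- Maps between projectivizations, possibly over different scalar fields, that leave the
transition probability of every pair of rays unchanged. -/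
def PreservesTransitionProbability (f : ℙ 𝕜 X → ℙ 𝕜' Y) : Prop :=
  ∀ p q, transitionProbability (f p) (f q) = transitionProbability p q

theorem preservesTransitionProbability_iff {f : ℙ 𝕜 X → ℙ 𝕜' Y} :
    PreservesTransitionProbability f ↔ ∀ (v w : X) (hv : v ≠ 0) (hw : w ≠ 0),
      transitionProbability (f (.mk 𝕜 v hv)) (f (.mk 𝕜 w hw)) =
        ‖⟪v, w⟫_𝕜‖ ^ 2 / (‖v‖ ^ 2 * ‖w‖ ^ 2) := by
  refine ⟨fun hf v w hv hw => (hf _ _).trans (transitionProbability_mk_mk hv hw), fun hf p q => ?_⟩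
  induction p using Projectivization.ind with | h v hv
  induction q using Projectivization.ind with | h w hw
  exact (hf v w hv hw).trans (transitionProbability_mk_mk hv hw).symm

namespace PreservesTransitionProbability

variable {f : ℙ 𝕜 X → ℙ 𝕜' Y}

theorem norm_inner_eq (hf : PreservesTransitionProbability f) {x x' : X} {y y' : Y}
    {hx : x ≠ 0} {hx' : x' ≠ 0} {hy : y ≠ 0} {hy' : y' ≠ 0}
    (hfx : f (.mk 𝕜 x hx) = .mk 𝕜' y hy) (hfx' : f (.mk 𝕜 x' hx') = .mk 𝕜' y' hy')
    (hnorm : ‖y‖ = ‖x‖) (hnorm' : ‖y'‖ = ‖x'‖) :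
    ‖⟪y, y'⟫_𝕜'‖ = ‖⟪x, x'⟫_𝕜‖ := by
  have h := hf (.mk 𝕜 x hx) (.mk 𝕜 x' hx')
  rw [hfx, hfx', transitionProbability_mk_mk, transitionProbability_mk_mk, hnorm, hnorm',
    div_left_inj' (by positivity)] at h
  exact (sq_eq_sq₀ (norm_nonneg _) (norm_nonneg _)).mp h

theorem orthonormal (hf : PreservesTransitionProbability f) {e : ι → X} {v : ι → Y}
    (he : Orthonormal 𝕜 e) (hv : ∀ i, ‖v i‖ = 1) {hv₀ : ∀ i, v i ≠ 0}
    (hfe : ∀ i, f (.mk 𝕜 (e i) (he.ne_zero i)) = .mk 𝕜' (v i) (hv₀ i)) :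
    Orthonormal 𝕜' v := by
  have hnorm (i : ι) : ‖v i‖ = ‖e i‖ := (hv i).trans (he.1 i).symm
  refine ⟨hv, fun i j hij => norm_eq_zero.mp ?_⟩
  rw [hf.norm_inner_eq (hfe i) (hfe j) (hnorm i) (hnorm j), he.2 hij, norm_zero]

theorem exists_map_mk_sum_smul [Fintype ι] (hf : PreservesTransitionProbability f)
    {e : ι → X} {v : ι → Y} (he : Orthonormal 𝕜 e) (hv : ∀ i, ‖v i‖ = 1) {hv₀ : ∀ i, v i ≠ 0}
    (hfe : ∀ i, f (.mk 𝕜 (e i) (he.ne_zero i)) = .mk 𝕜' (v i) (hv₀ i))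
    (a : ι → 𝕜) (ha : ∑ i, a i • e i ≠ 0) :
    ∃ b : ι → 𝕜', (∀ i, ‖b i‖ = ‖a i‖) ∧ ∃ hb : ∑ i, b i • v i ≠ 0,
      f (.mk 𝕜 (∑ i, a i • e i) ha) = .mk 𝕜' (∑ i, b i • v i) hb := by
  obtain ⟨y, hy, hnorm, hfy⟩ :=
    exists_norm_eq_and_mk_eq (f (.mk 𝕜 (∑ i, a i • e i) ha)) (norm_pos_iff.mpr ha)
  have hcoeff (i : ι) : ‖⟪v i, y⟫_𝕜'‖ = ‖a i‖ := by
    rw [hf.norm_inner_eq (hfe i) hfy.symm ((hv i).trans (he.1 i).symm) hnorm,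
      he.inner_right_fintype]
  have hbessel : ∑ i, ‖⟪v i, y⟫_𝕜'‖ ^ 2 = ‖y‖ ^ 2 := by
    simp only [hcoeff, hnorm, norm_sum_smul_sq_of_orthonormal he]
  have hsum : ∑ i, ⟪v i, y⟫_𝕜' • v i = y :=
    sum_inner_smul_eq_self_of_sum_norm_inner_sq_eq (hf.orthonormal he hv hfe) hbessel
  exact ⟨fun i => ⟪v i, y⟫_𝕜', hcoeff, hsum.trans_ne hy, by simp only [hsum, hfy]⟩

end PreservesTransitionProbability

theorem transition_preserving_sum_ray_general {f : ℙ 𝕜 X → ℙ 𝕜' Y}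
    (hf : PreservesTransitionProbability f) {e₁ e₂ : X} {v₁ v₂ : Y}
    (he₁ : ‖e₁‖ = 1) (he₂ : ‖e₂‖ = 1) (horth : ⟪e₁, e₂⟫_𝕜 = 0)
    (hv₁ : ‖v₁‖ = 1) (hv₂ : ‖v₂‖ = 1)
    {he₁₀ : e₁ ≠ 0} {he₂₀ : e₂ ≠ 0} {hv₁₀ : v₁ ≠ 0} {hv₂₀ : v₂ ≠ 0}
    (hf₁ : f (.mk 𝕜 e₁ he₁₀) = .mk 𝕜' v₁ hv₁₀) (hf₂ : f (.mk 𝕜 e₂ he₂₀) = .mk 𝕜' v₂ hv₂₀)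
    (he : e₁ + e₂ ≠ 0) :
    ∃ k : 𝕜', ‖k‖ = 1 ∧ ∃ hsum : v₁ + k • v₂ ≠ 0,
      f (.mk 𝕜 (e₁ + e₂) he) = .mk 𝕜' (v₁ + k • v₂) hsum := by
  have horthonormal : Orthonormal 𝕜 ![e₁, e₂] := by
    simp [orthonormal_vecCons_iff, he₁, he₂, horth]
  obtain ⟨b, hb, hsum, hfb⟩ := hf.exists_map_mk_sum_smul (v := ![v₁, v₂])
    (hv₀ := Fin.forall_fin_two.mpr ⟨hv₁₀, hv₂₀⟩) horthonormal
    (Fin.forall_fin_two.mpr ⟨hv₁, hv₂⟩) (Fin.forall_fin_two.mpr ⟨hf₁, hf₂⟩) 1 (by simpa using he)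
  simp only [Pi.one_apply, norm_one] at hb
  have hb₀ : b 0 ≠ 0 := ne_zero_of_norm_ne_zero ((hb 0).trans_ne one_ne_zero)
  have hsmul : b 0 • (v₁ + (b 1 / b 0) • v₂) = ∑ i, b i • ![v₁, v₂] i := by
    simp [smul_smul, mul_div_cancel₀ _ hb₀]
  refine ⟨b 1 / b 0, by rw [norm_div, hb, hb, div_one], fun h => hsum ?_, ?_⟩
  · rw [← hsmul, h, smul_zero]
  · have hfe : f (.mk 𝕜 (e₁ + e₂) he) = .mk 𝕜' (∑ i, b i • ![v₁, v₂] i) hsum := by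
      simpa using hfb
    exact hfe.trans ((Projectivization.mk_eq_mk_iff' 𝕜' _ _ _ _).mpr ⟨b 0, hsmul⟩)

end TransitionProbability

/-- Gauge fixing: if a transition-probability-preserving map of projectivizations sends
the rays of orthonormal vectors `e₁, e₂` to the rays of unit vectors `v₁, v₂`, then it
sends the ray of `e₁ + e₂` to the ray of `v₁ + k • v₂` for some phase `k`. -/
theorem transition_preserving_sum_ray
    {X Y : Type*}
    [NormedAddCommGroup X] [InnerProductSpace ℂ X]
    [NormedAddCommGroup Y] [InnerProductSpace ℂ Y]
    (f : Projectivization ℂ X → Projectivization ℂ Y)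
    (hf : ∀ (v w : X) (hv : v ≠ 0) (hw : w ≠ 0),
      ‖⟪(f (Projectivization.mk ℂ v hv)).rep, (f (Projectivization.mk ℂ w hw)).rep⟫_ℂ‖ ^ 2 /
          (‖(f (Projectivization.mk ℂ v hv)).rep‖ ^ 2 *
            ‖(f (Projectivization.mk ℂ w hw)).rep‖ ^ 2)
        = ‖⟪v, w⟫_ℂ‖ ^ 2 / (‖v‖ ^ 2 * ‖w‖ ^ 2))
    (e₁ e₂ : X) (he₁ : ‖e₁‖ = 1) (he₂ : ‖e₂‖ = 1) (horth : ⟪e₁, e₂⟫_ℂ = 0)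
    (v₁ v₂ : Y) (hv₁ : ‖v₁‖ = 1) (hv₂ : ‖v₂‖ = 1)
    (hf₁ : f (Projectivization.mk ℂ e₁ (fun h => by simp [h] at he₁)) =
      Projectivization.mk ℂ v₁ (fun h => by simp [h] at hv₁))
    (hf₂ : f (Projectivization.mk ℂ e₂ (fun h => by simp [h] at he₂)) =
      Projectivization.mk ℂ v₂ (fun h => by simp [h] at hv₂)) :
    ∃ k : ℂ, ‖k‖ = 1 ∧ ∃ hsum : v₁ + k • v₂ ≠ 0,
      f (Projectivization.mk ℂ (e₁ + e₂) (by
        intro hzero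
        have h1 : ⟪e₁, e₁ + e₂⟫_ℂ = 1 := by
          rw [inner_add_right, horth, add_zero, inner_self_eq_norm_sq_to_K, he₁]
          norm_num
        rw [hzero, inner_zero_right] at h1
        exact one_ne_zero h1.symm)) = Projectivization.mk ℂ (v₁ + k • v₂) hsum :=
  transition_preserving_sum_ray_general (preservesTransitionProbability_iff.mpr hf)
    he₁ he₂ horth hv₁ hv₂ hf₁ hf₂ _
end

section
/- Let X and Y be complex inner product spaces and let f : Projectivization ℂ X → Projectivization ℂ Y be a map that preserves transition probabilities. Let e₁, e₂ ∈ X be orthonormal (unit vectors with ⟪e₁,e₂⟫ = 0) and let v₁, v₂ ∈ Y be unit vectors satisfying f (mk e₁) = mk v₁, f (mk e₂) = mk v₂, and f (mk (e₁ + e₂)) = mk (v₁ + v₂). Then for every nonzero c ∈ ℂ there exists τ ∈ ℂ with f (mk (e₁ + c • e₂)) = mk (v₁ + τ • v₂) and either τ = c or τ = starRingEnd ℂ c (the complex conjugate of c). -/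
open scoped InnerProductSpace

/-!
Bessel's equality characterizes the plane spanned by two orthogonal vectors in terms of transition
probabilities, so the image of `e₁ + c • e₂` lies in the plane of `v₁` and `v₂`, and it is the ray
of some `v₁ + τ • v₂`. The transition probabilities with `v₁` and `v₁ + v₂` then determine the
distances of `τ` from `0` and from a nonzero real number, that is, they determine `τ` up to
reflection in the real axis.
-/

section Scalars

variable {𝕜 : Type*} [RCLike 𝕜] {z w : 𝕜}

theorem eq_or_eq_conj_of_norm_eq_of_re_eq (hnorm : ‖z‖ = ‖w‖) (hre : RCLike.re z = RCLike.re w) :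
    z = w ∨ z = starRingEnd 𝕜 w := by
  have him : RCLike.im z * RCLike.im z = RCLike.im w * RCLike.im w := by
    have hsq : ‖z‖ ^ 2 = ‖w‖ ^ 2 := by rw [hnorm]
    rw [RCLike.norm_sq_eq_def, RCLike.norm_sq_eq_def, hre] at hsq
    exact add_left_cancel hsq
  rcases mul_self_eq_mul_self_iff.1 him with him | him
  · exact Or.inl (RCLike.ext hre him)
  · exact Or.inr (RCLike.ext (by rw [hre, RCLike.conj_re]) (by rw [him, RCLike.conj_im]))

theorem re_eq_re_of_norm_eq_of_norm_one_add_mul_eq {t : ℝ} (ht : t ≠ 0) (hnorm : ‖z‖ = ‖w‖)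
    (hadd : ‖1 + z * t‖ = ‖1 + w * t‖) : RCLike.re z = RCLike.re w := by
  have expand (x : 𝕜) : ‖1 + x * t‖ ^ 2 = 1 + 2 * t * RCLike.re x + t ^ 2 * ‖x‖ ^ 2 := by
    simp only [RCLike.norm_sq_eq_def, map_add, RCLike.one_re, RCLike.one_im, RCLike.re_mul_ofReal,
      RCLike.im_mul_ofReal]
    ring
  have hsq := congrArg (· ^ 2) hadd
  simp only [expand, hnorm] at hsq
  exact mul_left_cancel₀ (mul_ne_zero two_ne_zero ht) (by linarith)

end Scalars

section OrthogonalProjection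

variable {𝕜 E : Type*} [RCLike 𝕜] [NormedAddCommGroup E] [InnerProductSpace 𝕜 E]
  {K L : Submodule 𝕜 E} [K.HasOrthogonalProjection] [L.HasOrthogonalProjection]

theorem norm_sq_eq_add_norm_sq_starProjection_of_isOrtho (h : K ⟂ L) (u : E) :
    ‖u‖ ^ 2 = ‖K.starProjection u‖ ^ 2 + ‖L.starProjection u‖ ^ 2 +
      ‖u - (K.starProjection u + L.starProjection u)‖ ^ 2 := by
  have hK := K.norm_sq_eq_add_norm_sq_starProjection u
  have hL := L.norm_sq_eq_add_norm_sq_starProjection (Kᗮ.starProjection u)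
  have hLK : L.starProjection (K.starProjection u) = 0 :=
    L.starProjection_apply_eq_zero_iff.2 (h (K.starProjection_apply_mem u))
  rw [Submodule.starProjection_orthogonal_val, Submodule.starProjection_orthogonal_val,
    map_sub, hLK, sub_zero, sub_sub] at hL
  rw [Submodule.starProjection_orthogonal_val] at hK
  rw [hK, hL, add_assoc]

theorem mem_sup_iff_starProjection_add_starProjection_eq (h : K ⟂ L) {u : E} :
    u ∈ K ⊔ L ↔ K.starProjection u + L.starProjection u = u := by
  refine ⟨fun hu => ?_, fun hu => hu ▸ Submodule.add_mem_sup
    (K.starProjection_apply_mem u) (L.starProjection_apply_mem u)⟩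
  obtain ⟨x, hx, y, hy, rfl⟩ := Submodule.mem_sup.1 hu
  rw [map_add, map_add, K.starProjection_eq_self_iff.2 hx, L.starProjection_eq_self_iff.2 hy,
    K.starProjection_apply_eq_zero_iff.2 (h.symm hy),
    L.starProjection_apply_eq_zero_iff.2 (h hx), add_zero, zero_add]

theorem mem_sup_iff_norm_sq_starProjection_add_eq (h : K ⟂ L) {u : E} :
    u ∈ K ⊔ L ↔ ‖K.starProjection u‖ ^ 2 + ‖L.starProjection u‖ ^ 2 = ‖u‖ ^ 2 := by
  rw [mem_sup_iff_starProjection_add_starProjection_eq h,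
    norm_sq_eq_add_norm_sq_starProjection_of_isOrtho h u, left_eq_add, sq_eq_zero_iff,
    norm_eq_zero, sub_eq_zero, eq_comm]

end OrthogonalProjection

section TransitionProb

variable {𝕜 E F : Type*} [RCLike 𝕜] [NormedAddCommGroup E] [InnerProductSpace 𝕜 E]
  [NormedAddCommGroup F] [InnerProductSpace 𝕜 F]

variable (𝕜) in
/-- The transition probability of two vectors. It is `0` if one of them is `0`. -/
noncomputable def transitionProb (v w : E) : ℝ :=
  ‖⟪v, w⟫_𝕜‖ ^ 2 / (‖v‖ ^ 2 * ‖w‖ ^ 2)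

theorem transitionProb_smul_smul {a b : 𝕜} (ha : a ≠ 0) (hb : b ≠ 0) (v w : E) :
    transitionProb 𝕜 (a • v) (b • w) = transitionProb 𝕜 v w := by
  have hab : ‖a‖ ^ 2 * ‖b‖ ^ 2 ≠ 0 := by positivity
  simp only [transitionProb, inner_smul_left, inner_smul_right, norm_mul, norm_smul,
    RCLike.norm_conj]
  rw [← mul_div_mul_left _ (‖v‖ ^ 2 * ‖w‖ ^ 2) hab]
  congr 1 <;> ring

@[simp]
theorem transitionProb_eq_zero_iff {v w : E} : transitionProb 𝕜 v w = 0 ↔ ⟪v, w⟫_𝕜 = 0 := by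
  simp +contextual [transitionProb, or_imp]

theorem transitionProb_eq_norm_starProjection_div_sq (v u : E) :
    transitionProb 𝕜 v u = (‖(𝕜 ∙ v).starProjection u‖ / ‖u‖) ^ 2 := by
  rcases eq_or_ne v 0 with rfl | hv
  · simp [transitionProb]
  · have hv' : ‖v‖ ≠ 0 := norm_ne_zero_iff.2 hv
    rw [Submodule.starProjection_singleton, norm_smul, norm_div, RCLike.norm_ofReal, abs_sq,
      transitionProb]
    field_simp

theorem transitionProb_add_transitionProb_eq_one_iff {v w u : E} (hvw : ⟪v, w⟫_𝕜 = 0)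
    (hu : u ≠ 0) :
    transitionProb 𝕜 v u + transitionProb 𝕜 w u = 1 ↔ u ∈ (𝕜 ∙ v) ⊔ (𝕜 ∙ w) := by
  have hortho : (𝕜 ∙ v) ⟂ (𝕜 ∙ w) := by simpa using hvw
  have hu' : ‖u‖ ^ 2 ≠ 0 := by positivity
  rw [mem_sup_iff_norm_sq_starProjection_add_eq hortho,
    transitionProb_eq_norm_starProjection_div_sq, transitionProb_eq_norm_starProjection_div_sq,
    div_pow, div_pow, ← add_div, div_eq_one_iff_eq hu']

theorem transitionProb_add_smul_add_smul {v w : E} (hv : v ≠ 0) (hvw : ⟪v, w⟫_𝕜 = 0) (a b : 𝕜) :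
    transitionProb 𝕜 (v + a • w) (v + b • w) =
      ‖1 + starRingEnd 𝕜 a * b * ((‖w‖ / ‖v‖) ^ 2 : ℝ)‖ ^ 2 /
        ((1 + ‖a‖ ^ 2 * (‖w‖ / ‖v‖) ^ 2) * (1 + ‖b‖ ^ 2 * (‖w‖ / ‖v‖) ^ 2)) := by
  have hv' : ‖v‖ ≠ 0 := norm_ne_zero_iff.2 hv
  have hnorm (c : 𝕜) : ‖v + c • w‖ ^ 2 = ‖v‖ ^ 2 * (1 + ‖c‖ ^ 2 * (‖w‖ / ‖v‖) ^ 2) := by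
    have hvcw : ⟪v, c • w⟫_𝕜 = 0 := by rw [inner_smul_right, hvw, mul_zero]
    rw [norm_add_sq (𝕜 := 𝕜), hvcw, norm_smul, map_zero]
    field_simp
    ring
  have hinner : ⟪v + a • w, v + b • w⟫_𝕜 =
      (‖v‖ ^ 2 : ℝ) * (1 + starRingEnd 𝕜 a * b * ((‖w‖ / ‖v‖) ^ 2 : ℝ)) := by
    have hv𝕜 : (‖v‖ : 𝕜) ≠ 0 := RCLike.ofReal_ne_zero.2 hv'
    simp only [inner_add_left, inner_add_right, inner_smul_left, inner_smul_right, hvw,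
      inner_eq_zero_symm.1 hvw, inner_self_eq_norm_sq_to_K, RCLike.ofReal_pow, RCLike.ofReal_div]
    field_simp
    ring
  rw [transitionProb, hnorm, hnorm, hinner, norm_mul, RCLike.norm_ofReal, abs_sq, mul_pow]
  field_simp

theorem norm_mul_norm_div_norm_eq_of_transitionProb_eq {e₁ e₂ : E} {v₁ v₂ : F} (he₁ : e₁ ≠ 0)
    (he : ⟪e₁, e₂⟫_𝕜 = 0) (hv₁ : v₁ ≠ 0) (hv : ⟪v₁, v₂⟫_𝕜 = 0) {c τ : 𝕜}
    (h : transitionProb 𝕜 v₁ (v₁ + τ • v₂) = transitionProb 𝕜 e₁ (e₁ + c • e₂)) :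
    ‖τ‖ * (‖v₂‖ / ‖v₁‖) = ‖c‖ * (‖e₂‖ / ‖e₁‖) := by
  have hv₀ := transitionProb_add_smul_add_smul hv₁ hv 0 τ
  have he₀ := transitionProb_add_smul_add_smul he₁ he 0 c
  simp only [zero_smul, add_zero, map_zero, zero_mul, norm_one, norm_zero, one_pow, one_mul,
    ne_eq, OfNat.ofNat_ne_zero, not_false_eq_true, zero_pow, one_div, ← mul_pow] at hv₀ he₀
  rw [hv₀, he₀, inv_inj, add_right_inj] at h
  exact (sq_eq_sq₀ (by positivity) (by positivity)).1 h

theorem eq_or_eq_conj_of_transitionProb_eq {e₁ e₂ : E} {v₁ v₂ : F} (he₁ : e₁ ≠ 0) (he₂ : e₂ ≠ 0)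
    (he : ⟪e₁, e₂⟫_𝕜 = 0) (hv₁ : v₁ ≠ 0) (hv : ⟪v₁, v₂⟫_𝕜 = 0) {c τ : 𝕜}
    (hgauge : transitionProb 𝕜 v₁ (v₁ + v₂) = transitionProb 𝕜 e₁ (e₁ + e₂))
    (hcoeff : transitionProb 𝕜 v₁ (v₁ + τ • v₂) = transitionProb 𝕜 e₁ (e₁ + c • e₂))
    (hsum : transitionProb 𝕜 (v₁ + v₂) (v₁ + τ • v₂) =
      transitionProb 𝕜 (e₁ + e₂) (e₁ + c • e₂)) :
    τ = c ∨ τ = starRingEnd 𝕜 c := by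
  have hratio : ‖v₂‖ / ‖v₁‖ = ‖e₂‖ / ‖e₁‖ := by
    simpa using norm_mul_norm_div_norm_eq_of_transitionProb_eq he₁ he hv₁ hv (c := 1) (τ := 1)
      (by simpa only [one_smul] using hgauge)
  have hratio₀ : ‖e₂‖ / ‖e₁‖ ≠ 0 := by positivity
  have hnorm : ‖τ‖ = ‖c‖ := by
    have h := norm_mul_norm_div_norm_eq_of_transitionProb_eq he₁ he hv₁ hv hcoeff
    rw [hratio] at h
    exact mul_right_cancel₀ hratio₀ h
  have hv₁₂ := transitionProb_add_smul_add_smul hv₁ hv 1 τ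
  have he₁₂ := transitionProb_add_smul_add_smul he₁ he 1 c
  simp only [one_smul, map_one, one_mul, hratio, hnorm] at hv₁₂ he₁₂
  rw [hv₁₂, he₁₂, div_left_inj' (by positivity), sq_eq_sq₀ (norm_nonneg _) (norm_nonneg _)] at hsum
  exact eq_or_eq_conj_of_norm_eq_of_re_eq hnorm
    (re_eq_re_of_norm_eq_of_norm_one_add_mul_eq (pow_ne_zero 2 hratio₀) hnorm hsum)

/-- The transition probability of two rays, computed from the representatives chosen by
`Projectivization.rep`. -/
noncomputable def rayTransitionProb (p q : Projectivization 𝕜 E) : ℝ :=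
  transitionProb 𝕜 p.rep q.rep

theorem rayTransitionProb_mk_mk {v w : E} (hv : v ≠ 0) (hw : w ≠ 0) :
    rayTransitionProb (Projectivization.mk 𝕜 v hv) (Projectivization.mk 𝕜 w hw) =
      transitionProb 𝕜 v w := by
  obtain ⟨a, ha⟩ := Projectivization.exists_smul_eq_mk_rep 𝕜 v hv
  obtain ⟨b, hb⟩ := Projectivization.exists_smul_eq_mk_rep 𝕜 w hw
  rw [rayTransitionProb, ← ha, ← hb]
  exact transitionProb_smul_smul a.ne_zero b.ne_zero v w

/-- A map of projectivizations that preserves transition probabilities, as in Wigner's theorem. -/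
def PreservesTransitionProb (f : Projectivization 𝕜 E → Projectivization 𝕜 F) : Prop :=
  ∀ p q, rayTransitionProb (f p) (f q) = rayTransitionProb p q

theorem preservesTransitionProb_iff {f : Projectivization 𝕜 E → Projectivization 𝕜 F} :
    PreservesTransitionProb f ↔ ∀ (v w : E) (hv : v ≠ 0) (hw : w ≠ 0),
      rayTransitionProb (f (Projectivization.mk 𝕜 v hv)) (f (Projectivization.mk 𝕜 w hw)) =
        transitionProb 𝕜 v w := by
  refine ⟨fun hf v w hv hw => (hf _ _).trans (rayTransitionProb_mk_mk hv hw), fun hf p q => ?_⟩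
  simpa only [Projectivization.mk_rep, rayTransitionProb] using
    hf p.rep q.rep p.rep_nonzero q.rep_nonzero

namespace PreservesTransitionProb

variable {f : Projectivization 𝕜 E → Projectivization 𝕜 F} {e₁ e₂ : E} {v₁ v₂ : F}

theorem transitionProb_eq (hf : PreservesTransitionProb f) {he₁ : e₁ ≠ 0} {he₂ : e₂ ≠ 0}
    {hv₁ : v₁ ≠ 0} {hv₂ : v₂ ≠ 0}
    (hf₁ : f (Projectivization.mk 𝕜 e₁ he₁) = Projectivization.mk 𝕜 v₁ hv₁)
    (hf₂ : f (Projectivization.mk 𝕜 e₂ he₂) = Projectivization.mk 𝕜 v₂ hv₂) :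
    transitionProb 𝕜 v₁ v₂ = transitionProb 𝕜 e₁ e₂ := by
  rw [← rayTransitionProb_mk_mk hv₁ hv₂, ← hf₁, ← hf₂, hf, rayTransitionProb_mk_mk]

theorem inner_eq_zero (hf : PreservesTransitionProb f) {he₁ : e₁ ≠ 0} {he₂ : e₂ ≠ 0}
    {hv₁ : v₁ ≠ 0} {hv₂ : v₂ ≠ 0}
    (hf₁ : f (Projectivization.mk 𝕜 e₁ he₁) = Projectivization.mk 𝕜 v₁ hv₁)
    (hf₂ : f (Projectivization.mk 𝕜 e₂ he₂) = Projectivization.mk 𝕜 v₂ hv₂)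
    (he : ⟪e₁, e₂⟫_𝕜 = 0) : ⟪v₁, v₂⟫_𝕜 = 0 := by
  rw [← transitionProb_eq_zero_iff, hf.transitionProb_eq hf₁ hf₂, transitionProb_eq_zero_iff, he]

theorem exists_map_mk_add_smul_eq (hf : PreservesTransitionProb f) (he : ⟪e₁, e₂⟫_𝕜 = 0)
    {he₁ : e₁ ≠ 0} {he₂ : e₂ ≠ 0} {hv₁ : v₁ ≠ 0} {hv₂ : v₂ ≠ 0}
    (hf₁ : f (Projectivization.mk 𝕜 e₁ he₁) = Projectivization.mk 𝕜 v₁ hv₁)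
    (hf₂ : f (Projectivization.mk 𝕜 e₂ he₂) = Projectivization.mk 𝕜 v₂ hv₂)
    (c : 𝕜) (hc : e₁ + c • e₂ ≠ 0) :
    ∃ (τ : 𝕜) (hτ : v₁ + τ • v₂ ≠ 0),
      f (Projectivization.mk 𝕜 (e₁ + c • e₂) hc) = Projectivization.mk 𝕜 (v₁ + τ • v₂) hτ := by
  have hv := hf.inner_eq_zero hf₁ hf₂ he
  obtain ⟨u, hu, hfu⟩ : ∃ (u : F) (hu : u ≠ 0),
      f (Projectivization.mk 𝕜 (e₁ + c • e₂) hc) = Projectivization.mk 𝕜 u hu :=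
    ⟨_, Projectivization.rep_nonzero _, (Projectivization.mk_rep _).symm⟩
  have hu_mem : u ∈ (𝕜 ∙ v₁) ⊔ (𝕜 ∙ v₂) := by
    rw [← transitionProb_add_transitionProb_eq_one_iff hv hu, hf.transitionProb_eq hf₁ hfu,
      hf.transitionProb_eq hf₂ hfu, transitionProb_add_transitionProb_eq_one_iff he hc]
    exact Submodule.add_mem_sup (Submodule.mem_span_singleton_self e₁)
      (Submodule.smul_mem _ c (Submodule.mem_span_singleton_self e₂))
  rw [← Submodule.span_insert, Submodule.mem_span_pair] at hu_mem
  obtain ⟨a, b, rfl⟩ := hu_mem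
  have ha : a ≠ 0 := by
    rintro rfl
    have horth : transitionProb 𝕜 e₁ (e₁ + c • e₂) = 0 := by
      rw [← hf.transitionProb_eq hf₁ hfu, transitionProb_eq_zero_iff, zero_smul, zero_add,
        inner_smul_right, hv, mul_zero]
    rw [transitionProb_eq_zero_iff, inner_add_right, inner_smul_right, he, mul_zero, add_zero,
      inner_self_eq_zero] at horth
    exact he₁ horth
  have hfactor : a • (v₁ + (b / a) • v₂) = a • v₁ + b • v₂ := by
    rw [smul_add, smul_smul, mul_div_cancel₀ b ha]
  exact ⟨b / a, right_ne_zero_of_smul (hfactor ▸ hu),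
    hfu.trans ((Projectivization.mk_eq_mk_iff' 𝕜 _ _ _ _).2 ⟨a, hfactor⟩)⟩

end PreservesTransitionProb

theorem transition_preserving_linear_or_antilinear_coefficient_general
    {f : Projectivization 𝕜 E → Projectivization 𝕜 F} (hf : PreservesTransitionProb f)
    {e₁ e₂ : E} (he : ⟪e₁, e₂⟫_𝕜 = 0) {v₁ v₂ : F}
    {he₁ : e₁ ≠ 0} {he₂ : e₂ ≠ 0} {hv₁ : v₁ ≠ 0} {hv₂ : v₂ ≠ 0}
    (hf₁ : f (Projectivization.mk 𝕜 e₁ he₁) = Projectivization.mk 𝕜 v₁ hv₁)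
    (hf₂ : f (Projectivization.mk 𝕜 e₂ he₂) = Projectivization.mk 𝕜 v₂ hv₂)
    {he₁₂ : e₁ + e₂ ≠ 0} {hv₁₂ : v₁ + v₂ ≠ 0}
    (hf₁₂ : f (Projectivization.mk 𝕜 (e₁ + e₂) he₁₂) = Projectivization.mk 𝕜 (v₁ + v₂) hv₁₂)
    (c : 𝕜) (hc : e₁ + c • e₂ ≠ 0) :
    ∃ τ : 𝕜, (τ = c ∨ τ = starRingEnd 𝕜 c) ∧ ∃ hτ : v₁ + τ • v₂ ≠ 0,
      f (Projectivization.mk 𝕜 (e₁ + c • e₂) hc) = Projectivization.mk 𝕜 (v₁ + τ • v₂) hτ := by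
  have hv : ⟪v₁, v₂⟫_𝕜 = 0 := hf.inner_eq_zero hf₁ hf₂ he
  obtain ⟨τ, hτ, hfτ⟩ := hf.exists_map_mk_add_smul_eq he hf₁ hf₂ c hc
  have hτc : τ = c ∨ τ = starRingEnd 𝕜 c :=
    eq_or_eq_conj_of_transitionProb_eq he₁ he₂ he hv₁ hv (hf.transitionProb_eq hf₁ hf₁₂)
      (hf.transitionProb_eq hf₁ hfτ) (hf.transitionProb_eq hf₁₂ hfτ)
  exact ⟨τ, hτc, hτ, hfτ⟩

end TransitionProb

/-- With the gauge fixed on `e₁ + e₂`, a transition-probability-preserving map of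
projectivizations sends the ray of `e₁ + c • e₂` to the ray of `v₁ + τ • v₂` where `τ`
is either `c` or its complex conjugate. -/
theorem transition_preserving_linear_or_antilinear_coefficient
    {X Y : Type*}
    [NormedAddCommGroup X] [InnerProductSpace ℂ X]
    [NormedAddCommGroup Y] [InnerProductSpace ℂ Y]
    (f : Projectivization ℂ X → Projectivization ℂ Y)
    (hf : ∀ (v w : X) (hv : v ≠ 0) (hw : w ≠ 0),
      ‖⟪(f (Projectivization.mk ℂ v hv)).rep, (f (Projectivization.mk ℂ w hw)).rep⟫_ℂ‖ ^ 2 /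
          (‖(f (Projectivization.mk ℂ v hv)).rep‖ ^ 2 *
            ‖(f (Projectivization.mk ℂ w hw)).rep‖ ^ 2)
        = ‖⟪v, w⟫_ℂ‖ ^ 2 / (‖v‖ ^ 2 * ‖w‖ ^ 2))
    (e₁ e₂ : X) (he₁ : ‖e₁‖ = 1) (he₂ : ‖e₂‖ = 1) (horth : ⟪e₁, e₂⟫_ℂ = 0)
    (v₁ v₂ : Y) (hv₁ : ‖v₁‖ = 1) (hv₂ : ‖v₂‖ = 1)
    (hf₁ : f (Projectivization.mk ℂ e₁ (fun h => by simp [h] at he₁)) =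
      Projectivization.mk ℂ v₁ (fun h => by simp [h] at hv₁))
    (hf₂ : f (Projectivization.mk ℂ e₂ (fun h => by simp [h] at he₂)) =
      Projectivization.mk ℂ v₂ (fun h => by simp [h] at hv₂))
    (hsum : v₁ + v₂ ≠ 0)
    (hf₁₂ : f (Projectivization.mk ℂ (e₁ + e₂) (by
        intro hzero
        have h1 : ⟪e₁, e₁ + e₂⟫_ℂ = 1 := by
          rw [inner_add_right, horth, add_zero, inner_self_eq_norm_sq_to_K, he₁]
          norm_num
        rw [hzero, inner_zero_right] at h1
        exact one_ne_zero h1.symm)) = Projectivization.mk ℂ (v₁ + v₂) hsum) :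
    ∀ c : ℂ, c ≠ 0 →
      ∃ τ : ℂ, (τ = c ∨ τ = (starRingEnd ℂ) c) ∧
        ∃ hτ : v₁ + τ • v₂ ≠ 0,
          f (Projectivization.mk ℂ (e₁ + c • e₂) (by
            intro hzero
            have h1 : ⟪e₁, e₁ + c • e₂⟫_ℂ = 1 := by
              rw [inner_add_right, inner_smul_right, horth, mul_zero, add_zero,
                inner_self_eq_norm_sq_to_K, he₁]
              norm_num
            rw [hzero, inner_zero_right] at h1
            exact one_ne_zero h1.symm)) = Projectivization.mk ℂ (v₁ + τ • v₂) hτ := by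
  intro c _
  exact transition_preserving_linear_or_antilinear_coefficient_general
    (preservesTransitionProb_iff.2 hf) horth hf₁ hf₂ hf₁₂ c _
end
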